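/- Let H be a separable complex Hilbert space and let N be a bounded normal operator on H (i.e., N*N = NN*). Then N is not Li-Yorke chaotic (as a dynamical system on H with metric d(x,y) = ‖x − y‖). -/

import Mathlib

open Filter Topology MeasureTheory
open scoped Classical ENNReal

noncomputable def distFreq {X : Type*} [MetricSpace X] (f : X → X) (x y : X) (τ : ℝ) (n : ℕ) : ℝ :=
  (((Finset.range n).filter fun i => dist (f^[i] x) (f^[i] y) < τ).card : ℝ) / n

def DistributionallyChaoticPair {X : Type*} [MetricSpace X] (f : X → X) (x y : X) : Prop :=
  (∀ τ : ℝ, 0 < τ → Filter.limsup (distFreq f x y τ) Filter.atTop = 1) ∧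
  (∃ ε : ℝ, 0 < ε ∧ Filter.liminf (distFreq f x y ε) Filter.atTop = 0)

def DistributionallyChaotic {X : Type*} [MetricSpace X] (f : X → X) : Prop :=
  ∃ Λ : Set X, ¬Λ.Countable ∧
    ∀ x ∈ Λ, ∀ y ∈ Λ, x ≠ y → DistributionallyChaoticPair f x y

def LiYorkePair {X : Type*} [MetricSpace X] (f : X → X) (x y : X) : Prop :=
  0 < Filter.limsup (fun n => edist (f^[n] x) (f^[n] y)) Filter.atTop ∧
  Filter.liminf (fun n => edist (f^[n] x) (f^[n] y)) Filter.atTop = 0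

def LiYorkeChaotic {X : Type*} [MetricSpace X] (f : X → X) : Prop :=
  ∃ Γ : Set X, ¬Γ.Countable ∧ ∀ x ∈ Γ, ∀ y ∈ Γ, x ≠ y → LiYorkePair f x y

def NormUnimodal {X : Type*} [NormedAddCommGroup X] [NormedSpace ℂ X] (T : X →L[ℂ] X) : Prop :=
  ∃ r : ℝ, 1 < r ∧ ∀ m : ℕ, ∃ x : X, x ≠ 0 ∧
    Filter.Tendsto (fun k => ‖(T ^ k) x‖) Filter.atTop (nhds 0) ∧
    ∀ i : ℕ, 1 ≤ i → i ≤ m → r ^ i * ‖x‖ ≤ ‖(T ^ i) x‖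

/-!
A normal operator satisfies `‖N x‖ ^ 2 = ⟪N† (N x), x⟫ ≤ ‖N (N x)‖ * ‖x‖`, so every sequence
`n ↦ ‖N ^ n x‖` is log-convex: once it increases strictly, it does so forever. If it comes
arbitrarily close to `0` along a subsequence, it can therefore never increase, and so it converges
to `0`. By linearity this applies to the differences of two orbits.
-/

section Paranormal

/-- Paranormality, a condition on `T` weaker than normality which says exactly that
`n ↦ ‖T^[n] x‖` is log-convex for every `x`. It is stated for arbitrary maps, since the growth of
norms along an orbit does not depend on linearity. -/
def IsParanormal {E : Type*} [Norm E] (T : E → E) : Prop :=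
  ∀ x, ‖T x‖ ^ 2 ≤ ‖T (T x)‖ * ‖x‖

variable {E : Type*} [SeminormedAddGroup E] {T : E → E} {x : E}

namespace IsParanormal

theorem norm_lt_norm_apply_apply (hT : IsParanormal T) (hx : ‖x‖ < ‖T x‖) :
    ‖T x‖ < ‖T (T x)‖ := by
  have hTx : 0 < ‖T x‖ := (norm_nonneg x).trans_lt hx
  by_contra! hle
  refine (hT x).not_gt ?_
  calc ‖T (T x)‖ * ‖x‖ ≤ ‖T x‖ * ‖x‖ := by gcongr
    _ < ‖T x‖ * ‖T x‖ := by gcongr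
    _ = ‖T x‖ ^ 2 := (sq _).symm

theorem strictMono_norm_iterate (hT : IsParanormal T) (hx : ‖x‖ < ‖T x‖) :
    StrictMono fun n ↦ ‖T^[n] x‖ := by
  refine strictMono_nat_of_lt_succ fun n ↦ ?_
  induction n with
  | zero => exact hx
  | succ n ih =>
    simp only [Function.iterate_succ_apply'] at ih ⊢
    exact hT.norm_lt_norm_apply_apply ih

theorem antitone_enorm_iterate_of_liminf_eq_zero (hT : IsParanormal T)
    (hx : liminf (fun n ↦ ‖T^[n] x‖ₑ) atTop = 0) : Antitone fun n ↦ ‖T^[n] x‖ₑ := by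
  refine antitone_nat_of_succ_le fun n ↦ ?_
  by_contra! hlt
  have hlt_norm : ‖T^[n] x‖ < ‖T (T^[n] x)‖ := by
    rwa [← not_le, enorm_le_iff_norm_le, not_le, Function.iterate_succ_apply'] at hlt
  have hgrow : StrictMono fun k ↦ ‖T^[k] (T^[n] x)‖ := hT.strictMono_norm_iterate hlt_norm
  have hsmall : ∃ᶠ m in atTop, ‖T^[m] x‖ₑ < ‖T^[n + 1] x‖ₑ :=
    frequently_lt_of_liminf_lt (h := hx.trans_lt (bot_le.trans_lt hlt))
  obtain ⟨m, hm, hnm⟩ := (hsmall.and_eventually (eventually_ge_atTop (n + 1))).exists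
  obtain ⟨k, rfl⟩ := Nat.exists_eq_add_of_le' hnm
  refine hm.not_ge (enorm_le_iff_norm_le.mpr ?_)
  have hle := hgrow.monotone (Nat.le_add_left 1 k)
  simp only [← Function.iterate_add_apply] at hle
  rwa [add_assoc, add_comm 1 n] at hle

theorem limsup_enorm_iterate_eq_zero (hT : IsParanormal T)
    (hx : liminf (fun n ↦ ‖T^[n] x‖ₑ) atTop = 0) :
    limsup (fun n ↦ ‖T^[n] x‖ₑ) atTop = 0 := by
  have hlim := tendsto_atTop_iInf (hT.antitone_enorm_iterate_of_liminf_eq_zero hx)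
  rw [hlim.limsup_eq, ← hlim.liminf_eq, hx]

end IsParanormal

end Paranormal

section Adjoint

variable {𝕜 H : Type*} [RCLike 𝕜] [NormedAddCommGroup H] [InnerProductSpace 𝕜 H] [CompleteSpace H]
  {T : H →L[𝕜] H}

theorem isParanormal_of_norm_adjoint_apply_le
    (hT : ∀ x, ‖ContinuousLinearMap.adjoint T x‖ ≤ ‖T x‖) : IsParanormal T := by
  intro x
  calc ‖T x‖ ^ 2 = RCLike.re (inner 𝕜 (ContinuousLinearMap.adjoint T (T x)) x) :=
        T.apply_norm_sq_eq_inner_adjoint_left x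
    _ ≤ ‖ContinuousLinearMap.adjoint T (T x)‖ * ‖x‖ := re_inner_le_norm _ _
    _ ≤ ‖T (T x)‖ * ‖x‖ := by gcongr; exact hT (T x)

theorem isParanormal_of_isStarNormal (hT : IsStarNormal T) : IsParanormal T :=
  isParanormal_of_norm_adjoint_apply_le fun x ↦
    (ContinuousLinearMap.isStarNormal_iff_norm_eq_adjoint.mp hT x).ge

end Adjoint

theorem LiYorkeChaotic.exists_liYorkePair {X : Type*} [MetricSpace X] {f : X → X}
    (hf : LiYorkeChaotic f) : ∃ x y, LiYorkePair f x y := by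
  obtain ⟨Γ, hΓ, hpair⟩ := hf
  obtain ⟨x, hx, y, hy, hxy⟩ : Γ.Nontrivial :=
    Set.not_subsingleton_iff.mp fun h ↦ hΓ h.countable
  exact ⟨x, y, hpair x hx y hy hxy⟩

theorem stmt_9_general {E F : Type*} [NormedAddCommGroup E] [FunLike F E E]
    [AddMonoidHomClass F E E] {T : F} (hT : IsParanormal T) (x y : E) : ¬ LiYorkePair T x y := by
  rintro ⟨hlimsup, hliminf⟩
  simp only [edist_eq_enorm_sub, ← iterate_map_sub] at hlimsup hliminf
  exact hlimsup.ne' (hT.limsup_enorm_iterate_eq_zero hliminf)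

/-- A bounded normal operator on a separable complex Hilbert space
is not Li-Yorke chaotic. -/
theorem stmt_9 {H : Type*} [NormedAddCommGroup H] [InnerProductSpace ℂ H]
    [CompleteSpace H] [TopologicalSpace.SeparableSpace H]
    (N : H →L[ℂ] H)
    (hN : ContinuousLinearMap.adjoint N * N = N * ContinuousLinearMap.adjoint N) :
    ¬ LiYorkeChaotic (fun x => N x) := by
  intro hchaotic
  obtain ⟨x, y, hxy⟩ := hchaotic.exists_liYorkePair
  exact stmt_9_general (isParanormal_of_isStarNormal ⟨hN⟩) x y hxy
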